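/- Let (G, I) be an interval total-sum game where I is a finite union of real intervals such that I ∩ ℤ is finite. If Eve has a winning strategy (a strategy such that every consistent play π satisfies Total(π) ∈ I) then she has a finite-memory winning strategy, i.e., a winning strategy computed by a finite-state machine. -/

import Mathlib

/-!
A real-valued liminf of integer partial sums is an integer, so Eve's objective says that the liminf
lies in the finite set `A` of integers in `I` (`int_liminf_iff`). On the infinite product of the
game with `ℤ`, whose positions record the current vertex and the current total weight, this is a
parity condition: clamping the weight to an interval slightly larger than the hull of `A` leaves
finitely many levels, and the least level occurring infinitely often must belong to `A`
(`levelWin_projIcc_iff`).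

*Eve wins the product positionally.* In the tree of histories consistent with a winning strategy,
each level `p ∉ A` carries an ordinal rank that does not increase while the levels stay `≥ p` and
decreases at each visit to `p` (`exists_signature`). For every position, fix a history reaching it
whose vector of ranks is lexicographically least, and play as the winning strategy does after that
history. If the least recurring level `q` of a resulting play were not in `A`, the ranks at the
levels `p ≤ q` would, one level after the other, become eventually constant, whereas the rank at
`q` decreases infinitely often (`exists_representatives`).

*The positional strategy reaches finitely many positions.* Every play consistent with it has its
liminf in `A`, hence returns infinitely often to the finite set of positions whose weight lies in
the hull of `A`. Each position has finitely many successors, so by König's lemma the excursions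
from this finite set cover only finitely many positions (`finite_reachable`). A machine storing
the current position is therefore finite and plays the strategy (`eveWinsFM_of_finite`).
-/

open Filter

/-- A game graph: vertex set `V`, Eve's vertices `Eve`, edge relation `E` (every vertex
has a successor), integer weight function `w`, and initial vertex `init`. -/
structure GameGraph (V : Type) where
  Eve : Set V
  E : V → V → Prop
  w : V → V → ℤ
  init : V
  succ : ∀ v, ∃ u, E v u

namespace GameGraph

variable {V : Type}

/-- `π` is a play starting at vertex `v`. -/
def IsPlayFrom (G : GameGraph V) (v : V) (π : ℕ → V) : Prop :=
  π 0 = v ∧ ∀ i, G.E (π i) (π (i + 1))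

/-- `π` is a play (from the initial vertex). -/
def IsPlay (G : GameGraph V) (π : ℕ → V) : Prop :=
  G.IsPlayFrom G.init π

/-- The prefix `π 0, …, π i` of a play, as a list. -/
def prefixList (π : ℕ → V) (i : ℕ) : List V :=
  List.ofFn (fun j : Fin (i + 1) => π j)

/-- A (history-based) strategy for Eve is legal if it always proposes a successor
of the current (Eve) vertex. -/
def EveLegal (G : GameGraph V) (σ : List V → V) : Prop :=
  ∀ (l : List V) (v : V), v ∈ G.Eve → G.E v (σ (l ++ [v]))

/-- A (history-based) strategy for Adam is legal if it always proposes a successor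
of the current (Adam) vertex. -/
def AdamLegal (G : GameGraph V) (σ : List V → V) : Prop :=
  ∀ (l : List V) (v : V), v ∉ G.Eve → G.E v (σ (l ++ [v]))

/-- The play `π` is consistent with Eve's strategy `σ`. -/
def ConsEve (G : GameGraph V) (σ : List V → V) (π : ℕ → V) : Prop :=
  ∀ i, π i ∈ G.Eve → π (i + 1) = σ (prefixList π i)

/-- The play `π` is consistent with Adam's strategy `σ`. -/
def ConsAdam (G : GameGraph V) (σ : List V → V) (π : ℕ → V) : Prop :=
  ∀ i, π i ∉ G.Eve → π (i + 1) = σ (prefixList π i)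

/-- Eve has a winning strategy for the objective `Win`. -/
def EveWins (G : GameGraph V) (Win : (ℕ → V) → Prop) : Prop :=
  ∃ σ : List V → V, G.EveLegal σ ∧ ∀ π, G.IsPlay π → G.ConsEve σ π → Win π

/-- Adam has a winning strategy: he can ensure the objective `Win` of Eve fails. -/
def AdamWins (G : GameGraph V) (Win : (ℕ → V) → Prop) : Prop :=
  ∃ σ : List V → V, G.AdamLegal σ ∧ ∀ π, G.IsPlay π → G.ConsAdam σ π → ¬ Win π

/-- Consistency with a positional Eve strategy. -/
def ConsEvePos (G : GameGraph V) (f : V → V) (π : ℕ → V) : Prop :=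
  ∀ i, π i ∈ G.Eve → π (i + 1) = f (π i)

/-- Consistency with a positional Adam strategy. -/
def ConsAdamPos (G : GameGraph V) (f : V → V) (π : ℕ → V) : Prop :=
  ∀ i, π i ∉ G.Eve → π (i + 1) = f (π i)

/-- Eve has a positional (memoryless) winning strategy. -/
def EveWinsPos (G : GameGraph V) (Win : (ℕ → V) → Prop) : Prop :=
  ∃ f : V → V, (∀ v ∈ G.Eve, G.E v (f v)) ∧
    ∀ π, G.IsPlay π → G.ConsEvePos f π → Win π

/-- Adam has a positional (memoryless) winning strategy. -/
def AdamWinsPos (G : GameGraph V) (Win : (ℕ → V) → Prop) : Prop :=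
  ∃ f : V → V, (∀ v, v ∉ G.Eve → G.E v (f v)) ∧
    ∀ π, G.IsPlay π → G.ConsAdamPos f π → ¬ Win π

/-- The run of the memory structure `(δ, m)` of a finite-state machine while
reading the play `π`: after `i` steps it has read `π 0, …, π (i-1)`. -/
def memRun {M : Type} (δ : M → V → M) (m : M) (π : ℕ → V) : ℕ → M
  | 0 => m
  | i + 1 => δ (memRun δ m π i) (π i)

/-- Consistency of a play with the finite-memory strategy given by the machine
`(m0, δ, o)`: at step `i`, the machine has memory `memRun δ m0 π i` (having read
`π 0, …, π (i-1)`) and outputs the move `o (memRun δ m0 π i) (π i)`. -/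
def ConsEveFM (G : GameGraph V) {M : Type} (m0 : M) (δ : M → V → M)
    (o : M → V → V) (π : ℕ → V) : Prop :=
  ∀ i, π i ∈ G.Eve → π (i + 1) = o (memRun δ m0 π i) (π i)

/-- Eve has a finite-memory winning strategy, i.e. one computed by a
finite-state machine. -/
def EveWinsFM (G : GameGraph V) (Win : (ℕ → V) → Prop) : Prop :=
  ∃ (M : Type) (_ : Fintype M) (m0 : M) (δ : M → V → M) (o : M → V → V),
    (∀ m, ∀ v ∈ G.Eve, G.E v (o m v)) ∧
    ∀ π, G.IsPlay π → G.ConsEveFM m0 δ o π → Win π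

/-- The total weight `w(π[..k])` of the length-`k` prefix of a play. -/
def partialSum (G : GameGraph V) (π : ℕ → V) (k : ℕ) : ℤ :=
  ∑ i ∈ Finset.range k, G.w (π i) (π (i + 1))

/-- The (liminf) mean-payoff of a play. -/
noncomputable def MP (G : GameGraph V) (π : ℕ → V) : ℝ :=
  liminf (fun k => (G.partialSum π k : ℝ) / (k : ℝ)) atTop

/-- The liminf payoff of a play, in the extended reals. -/
noncomputable def liminfPayoff (G : GameGraph V) (π : ℕ → V) : EReal :=
  liminf (fun i => ((G.w (π i) (π (i + 1)) : ℝ) : EReal)) atTop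

/-- The total-sum payoff of a play, in the extended reals. -/
noncomputable def totalPayoff (G : GameGraph V) (π : ℕ → V) : EReal :=
  liminf (fun k => ((G.partialSum π k : ℝ) : EReal)) atTop

/-- The discounted sum of a play, with discount factor `lam`. -/
noncomputable def DS (G : GameGraph V) (lam : ℝ) (π : ℕ → V) : ℝ :=
  ∑' i : ℕ, lam ^ i * (G.w (π i) (π (i + 1)) : ℝ)

/-- A play of a (min-)parity game is winning for Eve iff the minimal priority
occurring infinitely often is even. -/
def ParityWin (Ω : V → ℕ) (π : ℕ → V) : Prop :=
  ∃ p, Even p ∧ (∀ N, ∃ k, N ≤ k ∧ Ω (π k) = p) ∧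
    ∀ q, (∀ N, ∃ k, N ≤ k ∧ Ω (π k) = q) → p ≤ q

end GameGraph

/-! ### Eventual minima of sequences of levels -/

/-- The generalized parity condition on a sequence of levels: some level `a ∈ Good` is the least
level that occurs infinitely often. -/
def LevelWin {L : Type} [LinearOrder L] (Good : Set L) (c : ℕ → L) : Prop :=
  ∃ a ∈ Good, (∃ᶠ i in atTop, c i = a) ∧ ∀ᶠ i in atTop, a ≤ c i

lemma exists_least_frequent {L : Type} [LinearOrder L] [Finite L] (c : ℕ → L) :
    ∃ q, (∃ᶠ i in atTop, c i = q) ∧ ∀ᶠ i in atTop, q ≤ c i := by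
  have hne : {q | ∃ᶠ i in atTop, c i = q}.Nonempty := by
    by_contra hemp
    rw [Set.not_nonempty_iff_eq_empty, Set.eq_empty_iff_forall_notMem] at hemp
    have hall : ∀ q, ∀ᶠ i in atTop, c i ≠ q := fun q => by simpa using hemp q
    obtain ⟨i, hi⟩ := (Filter.eventually_all.2 hall).exists
    exact hi _ rfl
  obtain ⟨q, hq, hmin⟩ := Set.exists_min_image _ id (Set.toFinite _) hne
  refine ⟨q, hq, ?_⟩
  have hall : ∀ p, ∀ᶠ i in atTop, p < q → c i ≠ p := by
    intro p
    by_cases hp : p < q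
    · have : ¬ ∃ᶠ i in atTop, c i = p := fun h => absurd (hmin p h) (not_le.2 hp)
      rw [Filter.not_frequently] at this
      exact this.mono fun i hi _ => hi
    · exact Eventually.of_forall fun i h => absurd h hp
  filter_upwards [Filter.eventually_all.2 hall] with i hi
  by_contra hlt
  exact hi _ (not_le.1 hlt) rfl

lemma eventually_const_of_eventually_antitone {α : Type*} [LinearOrder α] [WellFoundedLT α]
    (u : ℕ → α) (h : ∀ᶠ i in atTop, u (i + 1) ≤ u i) : ∀ᶠ i in atTop, u (i + 1) = u i := by
  obtain ⟨N, hN⟩ := eventually_atTop.1 h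
  obtain ⟨i₀, hi₀, hmin⟩ := WellFounded.has_min (r := fun i j => u i < u j)
    (InvImage.wf u wellFounded_lt) (Set.Ici N) ⟨N, Set.self_mem_Ici⟩
  have hle : ∀ i, i₀ ≤ i → u i = u i₀ := by
    intro i hi
    induction i, hi using Nat.le_induction with
    | base => rfl
    | succ i hi ih =>
      have hNi : N ≤ i := le_trans hi₀ hi
      exact le_antisymm (ih ▸ hN i hNi) (not_lt.1 (hmin (i + 1) (Nat.le_succ_of_le hNi)))
  filter_upwards [eventually_ge_atTop i₀] with i hi
  rw [hle i hi, hle (i + 1) (by omega)]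

lemma lex_apply_le {L : Type} [LinearOrder L] {α : Type*} [LinearOrder α]
    {a b : L → α} (hab : toLex a ≤ toLex b) (p : L) (h : ∀ p' < p, b p' ≤ a p') : a p ≤ b p := by
  rcases hab.eq_or_lt with heq | hlt
  · exact (congrFun (toLex.injective heq) p).le
  · obtain ⟨j, hj, hlt⟩ := hlt
    rcases lt_trichotomy j p with h1 | rfl | h1
    · exact absurd hlt (not_lt.2 (h j h1))
    · exact hlt.le
    · exact (hj p h1).le

/-! ### Signatures and positional strategies -/

/-- `DropsIn step Ω p bad n h`: some path of `n + 1` steps from `h` through levels `≥ p` ends in a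
node of level exactly `p` satisfying `bad`. -/
def DropsIn {H L : Type} [LinearOrder L] (step : H → H → Prop) (Ω : H → L) (p : L)
    (bad : H → Prop) : ℕ → H → Prop
  | 0, h => ∃ k, step h k ∧ Ω k = p ∧ bad k
  | n + 1, h => ∃ k, step h k ∧ p ≤ Ω k ∧ DropsIn step Ω p bad n k

/-- If every infinite path of a tree satisfies the parity condition, then for each level `p` that
is not good, the number of visits to `p` before a level below `p` is visited is measured by an
ordinal rank: it does not increase while the levels stay `≥ p`, and decreases at each visit
to `p`. -/
lemma exists_signature {H L : Type} [LinearOrder L] (step : H → H → Prop) (Ω : H → L)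
    (Good : Set L)
    (hwin : ∀ h : ℕ → H, (∀ i, step (h i) (h (i + 1))) → LevelWin Good (fun i => Ω (h i)))
    (p : L) (hp : p ∉ Good) :
    ∃ θ : H → Ordinal.{0}, ∀ h h', step h h' →
      (p ≤ Ω h' → θ h' ≤ θ h) ∧ (Ω h' = p → θ h' < θ h) := by
  let S : H → H → Prop := fun h h' => step h h' ∧ p ≤ Ω h'
  let R : H → H → Prop := fun h' h => ∃ k, Relation.ReflTransGen S h k ∧ step k h' ∧ Ω h' = p
  have hwf : WellFounded R := by
    by_contra hnwf
    let N := DropsIn step Ω p (fun h => ¬ Acc R h)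
    have hN : ∀ h, ¬ Acc R h → ∃ n, N n h := by
      intro h hacc
      obtain ⟨h', hh', k, hk, hstep, hΩ⟩ := exists_not_acc_lt_of_not_acc hacc
      clear hacc
      induction hk using Relation.ReflTransGen.head_induction_on with
      | refl => exact ⟨0, h', hstep, hΩ, hh'⟩
      | head hS _ ih =>
        obtain ⟨n, hn⟩ := ih
        exact ⟨n + 1, _, hS.1, hS.2, hn⟩
    have hnext : ∀ z : {z : H × ℕ // N z.2 z.1}, ∃ z' : {z : H × ℕ // N z.2 z.1},
        S z.1.1 z'.1.1 ∧ (Ω z'.1.1 = p ∨ z'.1.2 < z.1.2) := by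
      rintro ⟨⟨h, n⟩, hz⟩
      cases n with
      | zero =>
        obtain ⟨h', hs, hΩ, hb⟩ := hz
        obtain ⟨n, hn⟩ := hN h' hb
        exact ⟨⟨(h', n), hn⟩, ⟨hs, hΩ.ge⟩, Or.inl hΩ⟩
      | succ n =>
        obtain ⟨h', hs, hΩ, hn⟩ := hz
        exact ⟨⟨(h', n), hn⟩, ⟨hs, hΩ⟩, Or.inr (Nat.lt_succ_self n)⟩
    choose f hf using hnext
    obtain ⟨h₀, hh₀⟩ : ∃ h, ¬ Acc R h := by
      by_contra hcon
      push Not at hcon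
      exact hnwf ⟨hcon⟩
    obtain ⟨n₀, hn₀⟩ := hN h₀ hh₀
    let z : ℕ → {z : H × ℕ // N z.2 z.1} := fun i => f^[i] ⟨(h₀, n₀), hn₀⟩
    have hz : ∀ i, z (i + 1) = f (z i) := fun i => Function.iterate_succ_apply' f i _
    have hS : ∀ i, S (z i).1.1 (z (i + 1)).1.1 := fun i => hz i ▸ (hf (z i)).1
    obtain ⟨a, ha, hfreq, hev⟩ := hwin (fun i => (z i).1.1) (fun i => (hS i).1)
    have hpge : ∀ᶠ i in atTop, p ≤ Ω (z i).1.1 := by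
      filter_upwards [eventually_ge_atTop 1] with i hi
      obtain ⟨j, rfl⟩ : ∃ j, i = j + 1 := ⟨i - 1, by omega⟩
      exact (hS j).2
    -- If `p` occurred only finitely often, the distances `(z i).1.2` would decrease forever.
    have hpfreq : ∃ᶠ i in atTop, Ω (z i).1.1 = p := by
      intro hnot
      have hdec : ∀ᶠ i in atTop, (z (i + 1)).1.2 < (z i).1.2 := by
        filter_upwards [(tendsto_add_atTop_nat 1).eventually hnot] with i hi
        have h1 := (hf (z i)).2
        rw [← hz i] at h1
        exact h1.resolve_left hi
      have hconst := eventually_const_of_eventually_antitone (fun i => (z i).1.2)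
        (hdec.mono fun i hi => hi.le)
      obtain ⟨i, h1, h2⟩ := (hdec.and hconst).exists
      exact absurd h2 h1.ne
    obtain ⟨i, h1, h2⟩ := (hfreq.and_eventually hpge).exists
    obtain ⟨j, h3, h4⟩ := (hpfreq.and_eventually hev).exists
    have : a = p := le_antisymm (h3 ▸ h4) (h1 ▸ h2)
    exact hp (this ▸ ha)
  have : IsWellFounded H R := ⟨hwf⟩
  refine ⟨IsWellFounded.rank R, fun h h' hs => ⟨fun hle => ?_, fun heq => ?_⟩⟩
  · rw [IsWellFounded.rank_eq R h']
    refine Ordinal.iSup_le fun b => ?_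
    obtain ⟨b, k, hk, hsb, hb⟩ := b
    exact Order.succ_le_of_lt (IsWellFounded.rank_lt_of_rel (r := R)
      ⟨k, Relation.ReflTransGen.head ⟨hs, hle⟩ hk, hsb, hb⟩)
  · exact IsWellFounded.rank_lt_of_rel (r := R) ⟨h, Relation.ReflTransGen.refl, hs, heq⟩

/-- Positional strategies from tree strategies: if all infinite paths of a tree of histories
satisfy the parity condition, one can select a single history `rep x` for every position `x` so
that always moving as the tree does at the selected history still satisfies the condition. The
selected history minimizes the vector of signatures lexicographically. -/
lemma exists_representatives {H X L : Type} [Nonempty H] [LinearOrder L] [Finite L]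
    (step : H → H → Prop) (pos : H → X) (Ω : X → L) (Good : Set L)
    (hwin : ∀ h : ℕ → H, (∀ i, step (h i) (h (i + 1))) →
      LevelWin Good (fun i => Ω (pos (h i)))) :
    ∃ rep : X → H, (∀ h, pos (rep (pos h)) = pos h) ∧
      ∀ x : ℕ → X, x 0 ∈ Set.range pos →
        (∀ i, ∃ h', step (rep (x i)) h' ∧ pos h' = x (i + 1)) →
        LevelWin Good (fun i => Ω (x i)) := by
  have hsig : ∀ p : L, ∃ θ : H → Ordinal.{0}, ∀ h h', step h h' →
      (p ≤ Ω (pos h') → θ h' ≤ θ h) ∧ (p ∉ Good → Ω (pos h') = p → θ h' < θ h) := by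
    intro p
    by_cases hp : p ∈ Good
    · exact ⟨fun _ => 0, fun h h' _ => ⟨fun _ => le_rfl, fun hn => absurd hp hn⟩⟩
    · obtain ⟨θ, hθ⟩ := exists_signature step (fun h => Ω (pos h)) Good hwin p hp
      exact ⟨θ, fun h h' hs => ⟨(hθ h h' hs).1, fun _ => (hθ h h' hs).2⟩⟩
  choose θ hθ using hsig
  let T : H → Lex (L → Ordinal.{0}) := fun h => toLex (fun p => θ p h)
  have hrep : ∀ x : X, ∃ g : H, ∀ h, pos h = x → pos g = x ∧ T g ≤ T h := by
    intro x
    by_cases hx : ∃ h, pos h = x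
    · obtain ⟨g, hg, hmin⟩ := WellFounded.has_min (r := fun a b => T a < T b)
        (InvImage.wf T wellFounded_lt) {h | pos h = x} hx
      exact ⟨g, fun h hh => ⟨hg, not_lt.1 (hmin h hh)⟩⟩
    · exact ⟨Classical.arbitrary H, fun h hh => absurd ⟨h, hh⟩ hx⟩
  choose rep hrep using hrep
  refine ⟨rep, fun h => (hrep _ h rfl).1, fun x hx0 hx => ?_⟩
  choose s hs hsx using hx
  obtain ⟨q, hqf, hqe⟩ := exists_least_frequent (fun i => Ω (x i))
  by_cases hq : q ∈ Good
  · exact ⟨q, hq, hqf, hqe⟩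
  exfalso
  have hqe' : ∀ᶠ i in atTop, q ≤ Ω (x (i + 1)) := (tendsto_add_atTop_nat 1).eventually hqe
  have hlex : ∀ i, T (rep (x (i + 1))) ≤ T (s i) := fun i => (hrep _ (s i) (hsx i)).2
  have hmono : ∀ p, p ≤ q → (∀ p' < p, ∀ᶠ i in atTop,
      θ p' (rep (x (i + 1))) = θ p' (rep (x i))) →
      ∀ᶠ i in atTop, θ p (rep (x (i + 1))) ≤ θ p (s i) ∧ θ p (s i) ≤ θ p (rep (x i)) := by
    intro p hpq hlt
    have hall : ∀ᶠ i in atTop, ∀ p', p' < p →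
        θ p' (rep (x (i + 1))) = θ p' (rep (x i)) :=
      Filter.eventually_all.2 fun p' => by
        by_cases h : p' < p
        · exact (hlt p' h).mono fun i hi _ => hi
        · exact Eventually.of_forall fun i hi => absurd hi h
    filter_upwards [hall, hqe'] with i hi hqi
    have hle : ∀ p' ≤ q, θ p' (s i) ≤ θ p' (rep (x i)) := fun p' hp' =>
      (hθ p' _ _ (hs i)).1 (by rw [hsx i]; exact hp'.trans hqi)
    refine ⟨lex_apply_le (hlex i) p fun p' hp' => ?_, hle p hpq⟩
    rw [hi p' hp']
    exact hle p' (hp'.le.trans hpq)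
  have hconst : ∀ p, p ≤ q → ∀ᶠ i in atTop,
      θ p (rep (x (i + 1))) = θ p (rep (x i)) := by
    intro p
    induction p using WellFoundedLT.induction with
    | ind p ih =>
      intro hpq
      exact eventually_const_of_eventually_antitone (fun i => θ p (rep (x i)))
        ((hmono p hpq fun p' hp' => ih p' hp' (hp'.le.trans hpq)).mono
          fun i hi => hi.1.trans hi.2)
  have hqf' : ∃ᶠ i in atTop, Ω (x (i + 1)) = q := by
    intro hnot
    apply hqf
    rw [← Filter.map_add_atTop_eq_nat 1]
    exact hnot
  obtain ⟨i, h1, h2, h3⟩ := (hqf'.and_eventually ((hconst q le_rfl).and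
    (hmono q le_rfl fun p' hp' => hconst p' hp'.le))).exists
  have h4 := (hθ q _ _ (hs i)).2 hq (by rw [hsx i]; exact h1)
  exact absurd h2 (h3.1.trans_lt h4).ne

/-! ### Finiteness of the reachable positions -/

/-- A form of König's lemma: in a finitely branching relation in which every infinite path from
the invariant `P` returns to a finite set `B`, only finitely many points are reachable. -/
lemma finite_reachable {X : Type} (R : X → X → Prop) (P : X → Prop) (B : Set X)
    (hB : B.Finite) (hbr : ∀ x, {y | R x y}.Finite) (hP : ∀ x y, P x → R x y → P y)
    (hpath : ∀ x : ℕ → X, P (x 0) → (∀ i, R (x i) (x (i + 1))) → ∃ i, x (i + 1) ∈ B)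
    (x₀ : X) (hx₀ : P x₀) : {y | Relation.ReflTransGen R x₀ y}.Finite := by
  let Q : X → X → Prop := fun x y => R x y ∧ y ∉ B
  have hacc : ∀ x, P x → Acc (fun y x => Q x y) x := by
    intro x hx
    by_contra hn
    obtain ⟨f, hf0, hf⟩ := not_acc_iff_exists_descending_chain.1 hn
    obtain ⟨i, hi⟩ := hpath f (hf0 ▸ hx) fun i => (hf i).1
    exact (hf i).2 hi
  have hfin : ∀ x, P x → {y | Relation.ReflTransGen Q x y}.Finite := by
    intro x hx
    induction hacc x hx with
    | intro x _ ih =>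
      have hsub : {y | Relation.ReflTransGen Q x y} ⊆
          {x} ∪ ⋃ z ∈ {z | Q x z}, {y | Relation.ReflTransGen Q z y} := by
        intro y hy
        rcases Relation.ReflTransGen.cases_head hy with rfl | ⟨z, hz, hzy⟩
        · exact Or.inl rfl
        · exact Or.inr (Set.mem_biUnion (show z ∈ {z | Q x z} from hz) hzy)
      refine Set.Finite.subset ((Set.finite_singleton x).union
        (Set.Finite.biUnion ((hbr x).subset fun z hz => hz.1) fun z hz => ?_)) hsub
      exact ih z hz (hP x z hx hz.1)
  have hsub : {y | Relation.ReflTransGen R x₀ y} ⊆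
      ⋃ z ∈ {z | (z ∈ B ∨ z = x₀) ∧ P z}, {y | Relation.ReflTransGen Q z y} := by
    intro y hy
    suffices h : P y ∧ ∃ z, ((z ∈ B ∨ z = x₀) ∧ P z) ∧ Relation.ReflTransGen Q z y by
      obtain ⟨-, z, hz, hzy⟩ := h
      exact Set.mem_biUnion (show z ∈ {z | (z ∈ B ∨ z = x₀) ∧ P z} from hz) hzy
    induction hy with
    | refl => exact ⟨hx₀, x₀, ⟨Or.inr rfl, hx₀⟩, Relation.ReflTransGen.refl⟩
    | tail _ hbc ih =>
      rename_i b c _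
      obtain ⟨hPb, z, hz, hzb⟩ := ih
      have hPc := hP _ _ hPb hbc
      refine ⟨hPc, ?_⟩
      by_cases hc : c ∈ B
      · exact ⟨c, ⟨Or.inl hc, hPc⟩, Relation.ReflTransGen.refl⟩
      · exact ⟨z, hz, hzb.tail ⟨hbc, hc⟩⟩
  refine Set.Finite.subset (Set.Finite.biUnion ?_ fun z hz => hfin z hz.2) hsub
  refine (hB.union (Set.finite_singleton x₀)).subset fun z hz => ?_
  exact hz.1

/-! ### Total payoffs -/

/-- A real liminf of integers is an integer, attained infinitely often and eventually a lower
bound. -/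
lemma int_liminf_iff (u : ℕ → ℤ) (I : Set ℝ) :
    (∃ x : ℝ, x ∈ I ∧ liminf (fun k => ((u k : ℝ) : EReal)) atTop = (x : EReal)) ↔
      ∃ a : ℤ, (a : ℝ) ∈ I ∧ (∃ᶠ k in atTop, u k = a) ∧ ∀ᶠ k in atTop, a ≤ u k := by
  have hback : ∀ a : ℤ, (∃ᶠ k in atTop, u k = a) → (∀ᶠ k in atTop, a ≤ u k) →
      liminf (fun k => ((u k : ℝ) : EReal)) atTop = ((a : ℝ) : EReal) := by
    intro a hf he
    apply le_antisymm
    · exact liminf_le_of_frequently_le' (hf.mono fun k hk => by rw [hk])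
    · refine le_liminf_of_le (by isBoundedDefault) (he.mono fun k hk => ?_)
      exact_mod_cast hk
  constructor
  · rintro ⟨x, hx, hl⟩
    have he : ∀ᶠ k in atTop, ⌈x⌉ ≤ u k := by
      have h1 : (((⌈x⌉ - 1 : ℝ)) : EReal) < liminf (fun k => ((u k : ℝ) : EReal)) atTop := by
        rw [hl, EReal.coe_lt_coe_iff]
        linarith [Int.ceil_lt_add_one x]
      filter_upwards [eventually_lt_of_lt_liminf h1] with k hk
      rw [EReal.coe_lt_coe_iff] at hk
      have : ⌈x⌉ - 1 < u k := by exact_mod_cast hk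
      omega
    have hf : ∃ᶠ k in atTop, u k = ⌈x⌉ := by
      have h1 : liminf (fun k => ((u k : ℝ) : EReal)) atTop < (((⌈x⌉ + 1 : ℝ)) : EReal) := by
        rw [hl, EReal.coe_lt_coe_iff]
        linarith [Int.le_ceil x]
      refine ((frequently_lt_of_liminf_lt (by isBoundedDefault) h1).and_eventually he).mono ?_
      rintro k ⟨hk, hk'⟩
      rw [EReal.coe_lt_coe_iff] at hk
      have : u k < ⌈x⌉ + 1 := by exact_mod_cast hk
      omega
    have hxa : x = (⌈x⌉ : ℝ) := by
      have := hback _ hf he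
      rw [hl] at this
      exact_mod_cast this
    exact ⟨⌈x⌉, hxa ▸ hx, hf, he⟩
  · rintro ⟨a, ha, hf, he⟩
    exact ⟨a, ha, hback a hf he⟩

/-- Clamping to `[lo - 1, hi + 1]` turns the payoff condition into a parity condition with
finitely many levels. -/
lemma levelWin_projIcc_iff (u : ℕ → ℤ) (A : Set ℤ) (lo hi : ℤ) (hle : lo - 1 ≤ hi + 1)
    (hA : ∀ a ∈ A, lo ≤ a ∧ a ≤ hi) :
    LevelWin {l : Set.Icc (lo - 1) (hi + 1) | (l : ℤ) ∈ A}
        (fun k => Set.projIcc (lo - 1) (hi + 1) hle (u k)) ↔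
      ∃ a ∈ A, (∃ᶠ k in atTop, u k = a) ∧ ∀ᶠ k in atTop, a ≤ u k := by
  have key : ∀ (l : Set.Icc (lo - 1) (hi + 1)) (s : ℤ), (l : ℤ) ∈ A →
      ((Set.projIcc (lo - 1) (hi + 1) hle s = l ↔ s = l) ∧
        (l ≤ Set.projIcc (lo - 1) (hi + 1) hle s ↔ (l : ℤ) ≤ s)) := by
    intro l s hl
    have := hA _ hl
    rw [Subtype.ext_iff, ← Subtype.coe_le_coe, Set.coe_projIcc]
    omega
  constructor
  · rintro ⟨l, hl, hf, he⟩
    exact ⟨l, hl, hf.mono fun k hk => (key l _ hl).1.1 hk, he.mono fun k hk => (key l _ hl).2.1 hk⟩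
  · rintro ⟨a, ha, hf, he⟩
    have := hA a ha
    refine ⟨⟨a, by omega, by omega⟩, ha, hf.mono fun k hk => (key _ _ ha).1.2 hk,
      he.mono fun k hk => (key _ _ ha).2.2 hk⟩

/-! ### Histories of a game -/

namespace GameGraph

variable {V : Type}

/-- The first `n` moves of `π` form a play prefix consistent with Eve's strategy `σ`. -/
def ConsUpTo (G : GameGraph V) (σ : List V → V) (n : ℕ) (π : ℕ → V) : Prop :=
  π 0 = G.init ∧ ∀ i < n, G.E (π i) (π (i + 1)) ∧
    (π i ∈ G.Eve → π (i + 1) = σ (prefixList π i))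

/-- Histories consistent with `σ`: a length `n` and a sequence of which only the entries
`0, …, n` matter. -/
abbrev Hist (G : GameGraph V) (σ : List V → V) : Type :=
  {z : ℕ × (ℕ → V) // G.ConsUpTo σ z.1 z.2}

/-- `b` extends the history `a` by one move. -/
def HistStep (G : GameGraph V) (σ : List V → V) (a b : G.Hist σ) : Prop :=
  b.1.1 = a.1.1 + 1 ∧ ∀ j ≤ a.1.1, b.1.2 j = a.1.2 j

/-- The position reached by a history: its last vertex and its total weight. -/
def histPos (G : GameGraph V) (σ : List V → V) (a : G.Hist σ) : V × ℤ :=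
  (a.1.2 a.1.1, G.partialSum a.1.2 a.1.1)

lemma prefixList_congr {π ρ : ℕ → V} {i : ℕ} (h : ∀ j ≤ i, π j = ρ j) :
    prefixList π i = prefixList ρ i := by
  unfold prefixList
  congr 1
  funext j
  exact h j (by omega)

lemma prefixList_eq_append (π : ℕ → V) (i : ℕ) : ∃ l, prefixList π i = l ++ [π i] := by
  refine ⟨List.ofFn (fun j : Fin i => π j), ?_⟩
  unfold prefixList
  rw [List.ofFn_succ_last]
  simp

lemma partialSum_congr (G : GameGraph V) {π ρ : ℕ → V} {n : ℕ} (h : ∀ j ≤ n, π j = ρ j) :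
    G.partialSum π n = G.partialSum ρ n := by
  unfold partialSum
  refine Finset.sum_congr rfl fun i hi => ?_
  have := Finset.mem_range.1 hi
  rw [h i (by omega), h (i + 1) (by omega)]

lemma partialSum_succ (G : GameGraph V) (π : ℕ → V) (n : ℕ) :
    G.partialSum π (n + 1) = G.partialSum π n + G.w (π n) (π (n + 1)) :=
  Finset.sum_range_succ _ _

lemma histPos_of_step (G : GameGraph V) (σ : List V → V) {a b : G.Hist σ}
    (h : G.HistStep σ a b) :
    G.histPos σ b = ((G.histPos σ b).1,
      (G.histPos σ a).2 + G.w (G.histPos σ a).1 (G.histPos σ b).1) := by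
  obtain ⟨h1, h2⟩ := h
  refine Prod.ext rfl ?_
  simp only [histPos]
  rw [h1, partialSum_succ, h2 _ le_rfl, G.partialSum_congr h2]

lemma exists_histStep (G : GameGraph V) (σ : List V → V) (a : G.Hist σ) (u : V)
    (hE : G.E (G.histPos σ a).1 u)
    (hu : (G.histPos σ a).1 ∈ G.Eve → u = σ (prefixList a.1.2 a.1.1)) :
    ∃ b, G.HistStep σ a b ∧
      G.histPos σ b = (u, (G.histPos σ a).2 + G.w (G.histPos σ a).1 u) := by
  obtain ⟨⟨n, π⟩, h0, hc⟩ := a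
  simp only [histPos] at hE hu h0 hc
  let ρ : ℕ → V := fun k => if k ≤ n then π k else u
  have hρ : ∀ j ≤ n, ρ j = π j := fun j hj => if_pos hj
  have hρn : ρ (n + 1) = u := if_neg (by omega)
  have hcons : G.ConsUpTo σ (n + 1) ρ := by
    refine ⟨(hρ 0 (Nat.zero_le n)).trans h0, fun i hi => ?_⟩
    have hpre : prefixList ρ i = prefixList π i :=
      prefixList_congr fun j hj => hρ j (by omega)
    rcases Nat.lt_succ_iff_lt_or_eq.1 hi with hlt | rfl
    · rw [hpre, hρ i (by omega), hρ (i + 1) (by omega)]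
      exact hc i hlt
    · rw [hpre, hρ i le_rfl, hρn]
      exact ⟨hE, hu⟩
  let b : G.Hist σ := ⟨(n + 1, ρ), hcons⟩
  have hstep : G.HistStep σ ⟨(n, π), h0, hc⟩ b := ⟨rfl, hρ⟩
  refine ⟨b, hstep, ?_⟩
  have hb : (G.histPos σ b).1 = u := hρn
  rw [G.histPos_of_step σ hstep, hb]

/-- An infinite path of histories converges to a consistent play whose partial sums are, up to a
shift, the total weights along the path. -/
lemma exists_limit_play (G : GameGraph V) (σ : List V → V) (h : ℕ → G.Hist σ)
    (hs : ∀ i, G.HistStep σ (h i) (h (i + 1))) :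
    ∃ ρ n, G.IsPlay ρ ∧ G.ConsEve σ ρ ∧
      ∀ i, (G.histPos σ (h i)).2 = G.partialSum ρ (i + n) := by
  have hlen : ∀ i, (h i).1.1 = i + (h 0).1.1 := by
    intro i
    induction i with
    | zero => simp
    | succ i ih => rw [(hs i).1, ih]; omega
  have hstable : ∀ i k j, j ≤ i + (h 0).1.1 → (h (i + k)).1.2 j = (h i).1.2 j := by
    intro i k j hj
    induction k with
    | zero => rfl
    | succ k ih =>
      rw [← ih]
      exact (hs (i + k)).2 j (by rw [hlen]; omega)
  let ρ : ℕ → V := fun j => (h j).1.2 j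
  have hρ : ∀ i j, j ≤ i + (h 0).1.1 → (h i).1.2 j = ρ j := by
    intro i j hj
    rcases le_total i j with hij | hij
    · obtain ⟨k, rfl⟩ := Nat.exists_eq_add_of_le hij
      exact (hstable i k _ hj).symm
    · obtain ⟨k, rfl⟩ := Nat.exists_eq_add_of_le hij
      exact hstable j k j (by omega)
  have hmove : ∀ i, G.E (ρ i) (ρ (i + 1)) ∧ (ρ i ∈ G.Eve → ρ (i + 1) = σ (prefixList ρ i)) := by
    intro i
    have hc := (h (i + 1)).2.2 i (by rw [hlen]; omega)
    rw [hρ _ i (by omega), hρ _ (i + 1) (by omega),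
      prefixList_congr fun j hj => hρ (i + 1) j (by omega)] at hc
    exact hc
  refine ⟨ρ, (h 0).1.1, ⟨(h 0).2.1, fun i => (hmove i).1⟩, fun i => (hmove i).2, fun i => ?_⟩
  simp only [histPos]
  rw [hlen i]
  exact G.partialSum_congr fun j hj => hρ i j hj

/-! ### The counting machine -/

/-- The position of the play after reading `v`, when the memory holds the previous position
(`none` before the first vertex). -/
def nextPos (G : GameGraph V) : Option (V × ℤ) → V → V × ℤ
  | none, v => (v, 0)
  | some x, v => (v, x.2 + G.w x.1 v)

/-- If a positional strategy `f` on the product of the game with the integers reaches only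
positions in a finite set `F`, a machine that stores the current position executes it. -/
lemma eveWinsFM_of_finite [Finite V] (G : GameGraph V) (Win : (ℕ → V) → Prop)
    (f : V × ℤ → V) (hf : ∀ v ∈ G.Eve, ∀ s, G.E v (f (v, s))) (F : Set (V × ℤ)) (hF : F.Finite)
    (h0 : (G.init, (0 : ℤ)) ∈ F)
    (hstep : ∀ v s u, (v, s) ∈ F → G.E v u → (v ∈ G.Eve → u = f (v, s)) →
      (u, s + G.w v u) ∈ F)
    (hwin : ∀ π, G.IsPlay π → (∀ i, π i ∈ G.Eve → π (i + 1) = f (π i, G.partialSum π i)) →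
      Win π) : G.EveWinsFM Win := by
  classical
  have : Finite F := hF
  let next : Option F → V → V × ℤ := fun m v => G.nextPos (m.map Subtype.val) v
  let δ : Option F → V → Option F := fun m v =>
    if h : next m v ∈ F then some ⟨next m v, h⟩ else none
  refine ⟨Option F, Fintype.ofFinite _, none, δ, fun m v => f (next m v), ?_, ?_⟩
  · intro m v hv
    rcases m with _ | x
    · exact hf v hv _
    · exact hf v hv _
  · intro π hπ hc
    have hrun : ∀ i, next (memRun δ none π i) (π i) = (π i, G.partialSum π i) ∧
        (π i, G.partialSum π i) ∈ F := by
      intro i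
      induction i with
      | zero =>
        have : G.partialSum π 0 = 0 := Finset.sum_range_zero _
        rw [this, hπ.1]
        exact ⟨rfl, h0⟩
      | succ i ih =>
        obtain ⟨hn, hmem⟩ := ih
        have hmove : π i ∈ G.Eve → π (i + 1) = f (π i, G.partialSum π i) := by
          intro hi
          rw [← hn]
          exact hc i hi
        have hrun : memRun δ none π (i + 1) = some ⟨(π i, G.partialSum π i), hmem⟩ := by
          change δ (memRun δ none π i) (π i) = _
          simp only [δ, hn, hmem, dite_true]
        rw [hrun, partialSum_succ]
        exact ⟨rfl, hstep _ _ _ hmem (hπ.2 i) hmove⟩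
    refine hwin π hπ fun i hi => ?_
    rw [← (hrun i).1]
    exact hc i hi

end GameGraph

/-- Let `(G, I)` be an interval total-sum game where `I` is a
finite union of real intervals such that `I ∩ ℤ` is finite. If Eve has a winning
strategy (ensuring that `Total(π)` is (finite and) in `I` for every consistent play),
then she has a finite-memory winning strategy. -/
theorem stmt18 {V : Type} [Fintype V] (G : GameGraph V) (r : ℕ)
    (Is : Fin r → Set ℝ) (hconn : ∀ i, (Is i).OrdConnected)
    (I : Set ℝ) (hI : I = ⋃ i, Is i)
    (hfin : (I ∩ Set.range ((↑) : ℤ → ℝ)).Finite) :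
    G.EveWins (fun π => ∃ x : ℝ, x ∈ I ∧ G.totalPayoff π = (x : EReal)) →
      G.EveWinsFM (fun π => ∃ x : ℝ, x ∈ I ∧ G.totalPayoff π = (x : EReal)) := by
  rintro ⟨σ, hσ, hwin⟩
  -- The finitely many integer values that are acceptable as payoffs.
  let A : Set ℤ := {a | (a : ℝ) ∈ I}
  have hAfin : A.Finite := by
    refine Set.Finite.of_finite_image (f := ((↑) : ℤ → ℝ)) (hfin.subset ?_)
      Int.cast_injective.injOn
    rintro _ ⟨a, ha, rfl⟩
    exact ⟨ha, a, rfl⟩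
  obtain ⟨lo, hlo⟩ := hAfin.bddBelow
  obtain ⟨hi', hhi'⟩ := hAfin.bddAbove
  -- The maximum keeps the clamping interval nonempty when `A` is empty.
  let hi := max hi' lo
  have hA : ∀ a ∈ A, lo ≤ a ∧ a ≤ hi := fun a ha => ⟨hlo ha, (hhi' ha).trans (le_max_left _ _)⟩
  have hle : lo - 1 ≤ hi + 1 := by
    have : lo ≤ hi := le_max_right _ _
    omega
  let Ω : V × ℤ → Set.Icc (lo - 1) (hi + 1) := fun x => Set.projIcc (lo - 1) (hi + 1) hle x.2
  let Good : Set (Set.Icc (lo - 1) (hi + 1)) := {l | (l : ℤ) ∈ A}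
  have hroot : G.ConsUpTo σ 0 (fun _ => G.init) := ⟨rfl, fun i hi => absurd hi (Nat.not_lt_zero i)⟩
  let root : G.Hist σ := ⟨(0, fun _ => G.init), hroot⟩
  have hroot_pos : G.histPos σ root = (G.init, 0) := rfl
  have : Nonempty (G.Hist σ) := ⟨root⟩
  obtain ⟨rep, hrep, hrepwin⟩ := exists_representatives (G.HistStep σ) (G.histPos σ) Ω Good (by
    intro h hs
    obtain ⟨ρ, n, hplay, hcons, hsum⟩ := G.exists_limit_play σ h hs
    obtain ⟨a, ha, hf, he⟩ := (int_liminf_iff (G.partialSum ρ) I).1 (hwin ρ hplay hcons)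
    refine (levelWin_projIcc_iff (fun i => (G.histPos σ (h i)).2) A lo hi hle hA).2
      ⟨a, ha, ?_, ?_⟩
    · intro hnot
      apply hf
      rw [← Filter.map_add_atTop_eq_nat n]
      refine Filter.mem_map.2 (hnot.mono fun i hia heq => hia ?_)
      exact (hsum i).trans heq
    · simp only [hsum]
      exact (tendsto_add_atTop_nat n).eventually he)
  let R : V × ℤ → V × ℤ → Prop := fun x y => ∃ h', G.HistStep σ (rep x) h' ∧ G.histPos σ h' = y
  have hpay : ∀ x : ℕ → V × ℤ, x 0 ∈ Set.range (G.histPos σ) → (∀ i, R (x i) (x (i + 1))) →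
      ∃ a ∈ A, (∃ᶠ k in atTop, (x k).2 = a) ∧ ∀ᶠ k in atTop, a ≤ (x k).2 := fun x h0 hx =>
    (levelWin_projIcc_iff (fun i => (x i).2) A lo hi hle hA).1 (hrepwin x h0 hx)
  have hreach : {y | Relation.ReflTransGen R (G.init, 0) y}.Finite := by
    refine finite_reachable R (fun x => x ∈ Set.range (G.histPos σ))
      (Set.univ ×ˢ Set.Icc lo hi) (Set.finite_univ.prod (Set.finite_Icc lo hi)) ?_ ?_ ?_
      _ ⟨root, hroot_pos⟩
    · intro x
      refine (Set.finite_range fun u : V => (u, (G.histPos σ (rep x)).2 +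
        G.w (G.histPos σ (rep x)).1 u)).subset ?_
      rintro _ ⟨h', hs, rfl⟩
      exact ⟨_, (G.histPos_of_step σ hs).symm⟩
    · rintro x _ _ ⟨h', _, rfl⟩
      exact ⟨h', rfl⟩
    · intro x h0 hx
      obtain ⟨a, ha, hf, -⟩ := hpay x h0 hx
      obtain ⟨i, hia, hi1⟩ := (hf.and_eventually (eventually_ge_atTop 1)).exists
      obtain ⟨j, rfl⟩ : ∃ j, i = j + 1 := ⟨i - 1, by omega⟩
      refine ⟨j, Set.mem_univ _, ?_⟩
      rw [hia]
      exact hA a ha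
  have hrange : ∀ x, Relation.ReflTransGen R (G.init, 0) x → G.histPos σ (rep x) = x := by
    intro x hx
    rcases Relation.ReflTransGen.cases_tail hx with rfl | ⟨y, -, h', -, rfl⟩
    · exact hrep root
    · exact hrep h'
  have hmove : ∀ x : V × ℤ, ∃ u, G.E x.1 u ∧
      (Relation.ReflTransGen R (G.init, 0) x → x.1 ∈ G.Eve →
        u = σ (GameGraph.prefixList (rep x).1.2 (rep x).1.1)) := by
    intro x
    by_cases hx : Relation.ReflTransGen R (G.init, 0) x ∧ x.1 ∈ G.Eve
    · obtain ⟨l, hl⟩ := GameGraph.prefixList_eq_append (rep x).1.2 (rep x).1.1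
      have hlast : (rep x).1.2 (rep x).1.1 = x.1 := congrArg Prod.fst (hrange x hx.1)
      rw [hlast] at hl
      exact ⟨_, hl ▸ hσ l x.1 hx.2, fun _ _ => rfl⟩
    · obtain ⟨u, hu⟩ := G.succ x.1
      exact ⟨u, hu, fun h1 h2 => absurd ⟨h1, h2⟩ hx⟩
  choose f hfE hfσ using hmove
  have hRstep : ∀ v s u, Relation.ReflTransGen R (G.init, 0) (v, s) → G.E v u →
      (v ∈ G.Eve → u = f (v, s)) → R (v, s) (u, s + G.w v u) := by
    intro v s u hvs hE hu
    have hp := hrange _ hvs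
    obtain ⟨b, hb, hbp⟩ := G.exists_histStep σ (rep (v, s)) u (by rw [hp]; exact hE) (by
      rw [hp]
      intro hv
      rw [hu hv]
      exact hfσ (v, s) hvs hv)
    rw [hp] at hbp
    exact ⟨b, hb, hbp⟩
  refine G.eveWinsFM_of_finite _ f (fun v _ s => hfE (v, s)) _ hreach
    Relation.ReflTransGen.refl
    (fun v s u hvs hE hu => Relation.ReflTransGen.tail hvs (hRstep v s u hvs hE hu)) ?_
  intro π hπ hc
  have hx0 : (π 0, G.partialSum π 0) = (G.init, 0) :=
    Prod.ext hπ.1 (Finset.sum_range_zero (fun i => G.w (π i) (π (i + 1))))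
  have hsucc : ∀ i, Relation.ReflTransGen R (G.init, 0) (π i, G.partialSum π i) →
      R (π i, G.partialSum π i) (π (i + 1), G.partialSum π (i + 1)) := by
    intro i hi
    rw [G.partialSum_succ]
    exact hRstep _ _ _ hi (hπ.2 i) (hc i)
  have hall : ∀ i, Relation.ReflTransGen R (G.init, 0) (π i, G.partialSum π i) := by
    intro i
    induction i with
    | zero => rw [hx0]
    | succ i ih => exact ih.tail (hsucc i ih)
  exact (int_liminf_iff (G.partialSum π) I).2
    (hpay (fun i => (π i, G.partialSum π i)) ⟨root, hroot_pos.trans hx0.symm⟩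
      fun i => hsucc i (hall i))
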